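/- Let N ≥ 1, let μ_1,…,μ_N ∈ ℂ, let α₀ > 0 and C ≥ α₀, and let V_1,…,V_N : [0,∞) → ℝ be measurable with α₀ ≤ V_j(s) ≤ C for all s ≥ 0 and all j. Suppose E : [0,∞) → ℝ is continuous with E(0) > 0 and satisfies E(t) = E(0) − 2 ∑_{j=1}^N ∫₀ᵗ (Re μ_j)² V_j(s) E(s) ds for all t ≥ 0, and suppose m : [0,∞) → ℝ satisfies m(t)/t → 0 as t → ∞. Then limsup_{t→∞} (1/t) · log( e^{2 m(t)} E(t) ) ≤ −ω, where ω := 2 α₀ ∑_{j=1}^N (Re μ_j)². Moreover, if Re μ_j ≠ 0 for every j, then ω > 0. -/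

import Mathlib

open MeasureTheory Real Filter

/-!
The energy identity is the linear equation `E' = -g E` in integrated form, with the measurable
damping rate `g = 2 ∑ (Re μ_j)² V_j`. Multiplying by the integrating factor gives an absolutely
continuous function whose derivative vanishes almost everywhere, so `E t = E 0 * exp (-∫₀ᵗ g)`
exactly. Hence `(1 / t) log (exp (2 m t) E t)` equals `-(1 / t) ∫₀ᵗ g` up to a term tending to `0`,
and the averages of `g` are at least `ω`.
-/

section AbsolutelyContinuous

variable {a b : ℝ}

theorem absolutelyContinuousOnInterval_comp_of_lipschitzOnWith {X Y : Type*} [PseudoMetricSpace X]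
    [PseudoMetricSpace Y] {φ : X → Y} {f : ℝ → X} {s : Set X} {K : NNReal}
    (hφ : LipschitzOnWith K φ s) (hf : AbsolutelyContinuousOnInterval f a b)
    (hfs : Set.MapsTo f (Set.uIcc a b) s) :
    AbsolutelyContinuousOnInterval (fun x => φ (f x)) a b := by
  refine squeeze_zero' (.of_forall fun _ => Finset.sum_nonneg fun _ _ => dist_nonneg) ?_
    (by simpa using Tendsto.const_mul (K : ℝ) hf)
  filter_upwards [mem_inf_of_right (mem_principal_self _)] with I hI
  rw [Finset.mul_sum]
  exact Finset.sum_le_sum fun i hi =>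
    hφ.dist_le_mul _ (hfs (hI.1 i hi).1) _ (hfs (hI.1 i hi).2)

theorem absolutelyContinuousOnInterval_comp_of_contDiff {F G : Type*} [NormedAddCommGroup F]
    [NormedSpace ℝ F] [ProperSpace F] [NormedAddCommGroup G] [NormedSpace ℝ G] {φ : F → G}
    {f : ℝ → F} (hφ : ContDiff ℝ 1 φ) (hf : AbsolutelyContinuousOnInterval f a b) :
    AbsolutelyContinuousOnInterval (fun x => φ (f x)) a b := by
  obtain ⟨C, hC⟩ := hf.exists_bound
  obtain ⟨K, hK⟩ := hφ.contDiffOn.exists_lipschitzOnWith one_ne_zero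
    (convex_closedBall (0 : F) C) (isCompact_closedBall 0 C)
  exact absolutelyContinuousOnInterval_comp_of_lipschitzOnWith hK hf fun x hx =>
    mem_closedBall_zero_iff.2 (hC x hx)

end AbsolutelyContinuous

theorem eq_mul_exp_integral_of_eq_add_integral_mul {f g : ℝ → ℝ} {a b : ℝ}
    (hg : IntervalIntegrable g volume a b)
    (hgf : IntervalIntegrable (fun s => g s * f s) volume a b)
    (hf : ∀ x ∈ Set.uIcc a b, f x = f a + ∫ s in a..x, g s * f s) :
    f b = f a * exp (∫ s in a..b, g s) := by
  -- The equation controls `f` only on `uIcc a b`, so `u` replaces it off that interval.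
  let u : ℝ → ℝ := fun x => f a + ∫ s in a..x, g s * f s
  let v : ℝ → ℝ := fun x => exp (-∫ s in a..x, g s)
  have hu : AbsolutelyContinuousOnInterval u a b :=
    (LipschitzWith.const (f a)).lipschitzOnWith.absolutelyContinuousOnInterval.fun_add
      (hgf.absolutelyContinuousOnInterval_intervalIntegral Set.left_mem_uIcc)
  have hv : AbsolutelyContinuousOnInterval v a b :=
    absolutelyContinuousOnInterval_comp_of_contDiff contDiff_exp
      (hg.absolutelyContinuousOnInterval_intervalIntegral Set.left_mem_uIcc).fun_neg
  have huv : ∀ᵐ x, x ∈ Set.uIcc a b → HasDerivAt (fun x => u x * v x) 0 x := by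
    filter_upwards [hg.ae_hasDerivAt_integral, hgf.ae_hasDerivAt_integral] with x hgx hgfx hx
    have hu' : HasDerivAt u (g x * f x) x := (hgfx hx a Set.left_mem_uIcc).const_add (f a)
    have hv' : HasDerivAt v (v x * -g x) x := (hgx hx a Set.left_mem_uIcc).neg.exp
    refine (hu'.mul hv').congr_deriv ?_
    rw [hf x hx]
    ring
  obtain ⟨c, hc⟩ := (hu.fun_mul hv).const_of_ae_hasDerivAt_zero huv
  have hab : u b * v b = u a * v a :=
    (hc b Set.right_mem_uIcc).trans (hc a Set.left_mem_uIcc).symm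
  calc f b = u b * v b * exp (∫ s in a..b, g s) := by
        rw [mul_assoc, ← exp_add, neg_add_cancel, exp_zero, mul_one]
        exact hf b Set.right_mem_uIcc
    _ = f a * exp (∫ s in a..b, g s) := by
        rw [hab]
        simp [u, v]

theorem integral_mem_Icc_of_forall_mem_Icc {g : ℝ → ℝ} {a b ω K : ℝ} (hab : a ≤ b)
    (hg : IntervalIntegrable g volume a b) (hgb : ∀ s ∈ Set.Icc a b, g s ∈ Set.Icc ω K) :
    ∫ s in a..b, g s ∈ Set.Icc (ω * (b - a)) (K * (b - a)) := by
  constructor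
  · simpa [mul_comm] using
      intervalIntegral.integral_mono_on hab intervalIntegrable_const hg fun s hs => (hgb s hs).1
  · simpa [mul_comm] using
      intervalIntegral.integral_mono_on hab hg intervalIntegrable_const fun s hs => (hgb s hs).2

theorem intervalIntegrable_of_forall_mem_Icc {g : ℝ → ℝ} {a b ω K : ℝ} (hab : a ≤ b)
    (hg : AEMeasurable g (volume.restrict (Set.Ioc a b)))
    (hgb : ∀ s ∈ Set.Ioc a b, g s ∈ Set.Icc ω K) : IntervalIntegrable g volume a b :=
  (intervalIntegrable_iff_integrableOn_Ioc_of_le hab).2 <| .of_mem_Icc ω K hg <|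
    ae_restrict_of_forall_mem measurableSet_Ioc hgb

section LogarithmicRate

variable {m G : ℝ → ℝ} {c ω K : ℝ}

theorem one_div_mul_log_exp_mul_mul_exp_neg (hc : c ≠ 0) (x y t : ℝ) :
    1 / t * log (exp (2 * x) * (c * exp (-y))) = 2 * (x / t) + log c / t - y / t := by
  rw [log_mul (exp_pos _).ne' (mul_ne_zero hc (exp_pos _).ne'), log_mul hc (exp_pos _).ne',
    log_exp, log_exp]
  ring

theorem limsup_one_div_mul_log_exp_mul_mul_exp_neg_le (hc : c ≠ 0)
    (hm : Tendsto (fun t => m t / t) atTop (nhds 0))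
    (hG : ∀ᶠ t in atTop, G t ∈ Set.Icc (ω * t) (K * t)) :
    limsup (fun t => 1 / t * log (exp (2 * m t) * (c * exp (-G t)))) atTop ≤ -ω := by
  simp only [one_div_mul_log_exp_mul_mul_exp_neg hc]
  have hlim (r : ℝ) : Tendsto (fun t => 2 * (m t / t) + log c / t - r) atTop (nhds (-r)) := by
    simpa using ((hm.const_mul 2).add
      (tendsto_const_nhds (x := log c) |>.div_atTop tendsto_id)).sub_const r
  have hmean : ∀ᶠ t in atTop, G t / t ∈ Set.Icc ω K := by
    filter_upwards [hG, eventually_gt_atTop 0] with t hGt ht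
    exact ⟨(le_div_iff₀ ht).2 hGt.1, (div_le_iff₀ ht).2 hGt.2⟩
  -- The `limsup` is taken in `ℝ`, where that of a function tending to `-∞` is a junk value.
  have hlower : IsBoundedUnder (· ≥ ·) atTop
      fun t => 2 * (m t / t) + log c / t - G t / t :=
    (hlim K).isBoundedUnder_ge.mono_ge <| hmean.mono fun t ht => sub_le_sub_left ht.2 _
  rw [← (hlim ω).limsup_eq]
  exact limsup_le_limsup (hmean.mono fun t ht => sub_le_sub_left ht.1 _)
    hlower.isCoboundedUnder_le (hlim ω).isBoundedUnder_le

end LogarithmicRate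

/-- The total damping rate `2 ∑ⱼ (Re μⱼ)² Vⱼ(s)`, in terms of which the energy identity reads
`E t = E 0 - ∫₀ᵗ dampingRate μ V s * E s ds`. -/
noncomputable def dampingRate {ι : Type*} [Fintype ι] (μ : ι → ℂ) (V : ι → ℝ → ℝ) (s : ℝ) : ℝ :=
  2 * ∑ j, (μ j).re ^ 2 * V j s

section DampingRate

variable {ι : Type*} [Fintype ι] {μ : ι → ℂ} {V : ι → ℝ → ℝ} {a b α C : ℝ}

theorem dampingRate_mem_Icc {s : ℝ} (hV : ∀ j, V j s ∈ Set.Icc α C) :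
    dampingRate μ V s ∈ Set.Icc (2 * α * ∑ j, (μ j).re ^ 2) (2 * C * ∑ j, (μ j).re ^ 2) := by
  have hconst (r : ℝ) : 2 * r * ∑ j, (μ j).re ^ 2 = 2 * ∑ j, (μ j).re ^ 2 * r := by
    rw [← Finset.sum_mul]
    ring
  rw [hconst, hconst, dampingRate]
  constructor <;> gcongr with j
  exacts [(hV j).1, (hV j).2]

theorem intervalIntegrable_dampingRate (hV : ∀ j, IntervalIntegrable (V j) volume a b) :
    IntervalIntegrable (dampingRate μ V) volume a b := by
  have hsum := IntervalIntegrable.sum Finset.univ fun j _ => (hV j).const_mul ((μ j).re ^ 2)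
  exact (hsum.const_mul 2).congr fun s _ => by simp [dampingRate]

theorem integral_dampingRate_mul {E : ℝ → ℝ} (hV : ∀ j, IntervalIntegrable (V j) volume a b)
    (hE : ContinuousOn E (Set.uIcc a b)) :
    ∫ s in a..b, dampingRate μ V s * E s = 2 * ∑ j, ∫ s in a..b, (μ j).re ^ 2 * V j s * E s := by
  simp only [dampingRate, mul_assoc, Finset.sum_mul, intervalIntegral.integral_const_mul]
  rw [intervalIntegral.integral_finsetSum fun j _ =>
    ((hV j).mul_continuousOn hE).const_mul ((μ j).re ^ 2)]
  simp only [intervalIntegral.integral_const_mul]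

theorem eq_mul_exp_neg_integral_dampingRate {E : ℝ → ℝ} {t : ℝ} (ht : 0 ≤ t)
    (hV : ∀ j, IntervalIntegrable (V j) volume 0 t) (hEcont : ContinuousOn E (Set.Icc 0 t))
    (hE : ∀ x ∈ Set.Icc 0 t,
      E x = E 0 - 2 * ∑ j, ∫ s in (0 : ℝ)..x, (μ j).re ^ 2 * V j s * E s) :
    E t = E 0 * exp (-∫ s in (0 : ℝ)..t, dampingRate μ V s) := by
  rw [← Set.uIcc_of_le ht] at hEcont hE
  have hrate := intervalIntegrable_dampingRate (μ := μ) hV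
  rw [← intervalIntegral.integral_neg]
  refine eq_mul_exp_integral_of_eq_add_integral_mul hrate.neg
    (hrate.neg.mul_continuousOn hEcont) fun x hx => ?_
  have hsub : Set.uIcc 0 x ⊆ Set.uIcc 0 t := Set.uIcc_subset_uIcc_left hx
  simp only [neg_mul, intervalIntegral.integral_neg]
  rw [integral_dampingRate_mul (fun j => (hV j).mono_set hsub) (hEcont.mono hsub),
    ← sub_eq_add_neg]
  exact hE x hx

end DampingRate

theorem stmt_2_general {ι : Type*} [Fintype ι] (μ : ι → ℂ) (α C : ℝ) (V : ι → ℝ → ℝ)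
    (hVmeas : ∀ j, AEMeasurable (V j) (volume.restrict (Set.Ici 0)))
    (hV : ∀ j, ∀ s ≥ (0 : ℝ), V j s ∈ Set.Icc α C)
    (E : ℝ → ℝ) (hEcont : ContinuousOn E (Set.Ici 0)) (hE0 : 0 < E 0)
    (hE : ∀ t ≥ (0 : ℝ),
      E t = E 0 - 2 * ∑ j, ∫ s in (0 : ℝ)..t, (μ j).re ^ 2 * V j s * E s)
    (m : ℝ → ℝ) (hm : Tendsto (fun t => m t / t) atTop (nhds 0)) :
    limsup (fun t => 1 / t * log (exp (2 * m t) * E t)) atTop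
      ≤ -(2 * α * ∑ j, (μ j).re ^ 2) := by
  have hVint {t : ℝ} (ht : 0 ≤ t) (j : ι) : IntervalIntegrable (V j) volume 0 t := by
    have hsub : Set.Ioc 0 t ⊆ Set.Ici 0 := fun s hs => hs.1.le
    exact intervalIntegrable_of_forall_mem_Icc ht ((hVmeas j).mono_set hsub) fun s hs =>
      hV j s (hsub hs)
  have hEexp : ∀ᶠ t in atTop, E t = E 0 * exp (-∫ s in (0 : ℝ)..t, dampingRate μ V s) := by
    filter_upwards [eventually_ge_atTop 0] with t ht
    exact eq_mul_exp_neg_integral_dampingRate ht (hVint ht)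
      (hEcont.mono Set.Icc_subset_Ici_self) fun x hx => hE x hx.1
  have hrate : ∀ᶠ t in atTop, ∫ s in (0 : ℝ)..t, dampingRate μ V s ∈
      Set.Icc (2 * α * (∑ j, (μ j).re ^ 2) * t) (2 * C * (∑ j, (μ j).re ^ 2) * t) := by
    filter_upwards [eventually_ge_atTop 0] with t ht
    simpa only [sub_zero] using integral_mem_Icc_of_forall_mem_Icc ht
      (intervalIntegrable_dampingRate (hVint ht)) fun s hs =>
        dampingRate_mem_Icc fun j => hV j s hs.1
  rw [limsup_congr (hEexp.mono fun t ht => by rw [ht])]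
  exact limsup_one_div_mul_log_exp_mul_mul_exp_neg_le hE0.ne' hm hrate

/-- Deterministic pathwise core of Theorem 1.5: exponential stabilization of the
`L²`-norm `e^{2 m(t)} E(t)` where `E` satisfies the energy identity and `m(t)/t → 0`. -/
theorem stmt_2 (N : ℕ) (hN : 1 ≤ N) (μ : Fin N → ℂ)
    (α₀ C : ℝ) (hα₀ : 0 < α₀) (hC : α₀ ≤ C)
    (V : Fin N → ℝ → ℝ) (hVmeas : ∀ j, Measurable (V j))
    (hVlb : ∀ j, ∀ s ≥ (0:ℝ), α₀ ≤ V j s)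
    (hVub : ∀ j, ∀ s ≥ (0:ℝ), V j s ≤ C)
    (E : ℝ → ℝ) (hEcont : ContinuousOn E (Set.Ici 0)) (hE0 : 0 < E 0)
    (hE : ∀ t ≥ (0:ℝ),
      E t = E 0 - 2 * ∑ j, ∫ s in (0:ℝ)..t, (μ j).re ^ 2 * V j s * E s)
    (m : ℝ → ℝ) (hm : Tendsto (fun t => m t / t) atTop (nhds 0)) :
    (Filter.limsup (fun t => (1 / t) * Real.log (Real.exp (2 * m t) * E t)) atTop
        ≤ -(2 * α₀ * ∑ j, (μ j).re ^ 2)) ∧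
    ((∀ j, (μ j).re ≠ 0) → 0 < 2 * α₀ * ∑ j, (μ j).re ^ 2) := by
  refine ⟨stmt_2_general μ α₀ C V (fun j => (hVmeas j).aemeasurable)
    (fun j s hs => ⟨hVlb j s hs, hVub j s hs⟩) E hEcont hE0 hE m hm, fun hμ => ?_⟩
  exact mul_pos (mul_pos two_pos hα₀) <|
    Finset.sum_pos (fun j _ => sq_pos_of_ne_zero (hμ j)) ⟨⟨0, hN⟩, Finset.mem_univ _⟩
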